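/- Let Y be a CAT(0) space, λ ∈ ℝ, and let f : Y → ℝ be λ-convex and Lipschitz with Lipschitz constant L. Then for every y ∈ Y the gradient flow trajectory (y_t)_{t>0} for f starting from y extends continuously to t = 0 and is L-Lipschitz in time: d(y_t, y_s) ≤ L·|t − s| for all t, s ≥ 0. -/

import Mathlib

open Filter MeasureTheory Set Bornology
open scoped ENNReal Topology NNReal

/-- A (constant-speed, minimizing) geodesic defined on `[0,1]`:
`d(γ_s, γ_t) = |s - t| * d(γ_0, γ_1)` for all `s, t ∈ [0,1]`. -/
def IsGeodesic {Y : Type*} [MetricSpace Y] (γ : ℝ → Y) : Prop :=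
  ∀ s ∈ Set.Icc (0:ℝ) 1, ∀ t ∈ Set.Icc (0:ℝ) 1,
    dist (γ s) (γ t) = |s - t| * dist (γ 0) (γ 1)

/-- A metric space is geodesic if every two points are joined by a geodesic. -/
def GeodesicSpace (Y : Type*) [MetricSpace Y] : Prop :=
  ∀ x y : Y, ∃ γ : ℝ → Y, IsGeodesic γ ∧ γ 0 = x ∧ γ 1 = y

/-- The CAT(0) condition: geodesic space satisfying the comparison inequality
`d²(γ_t, a) ≤ (1-t)·d²(γ_0, a) + t·d²(γ_1, a) − t(1-t)·d²(γ_0, γ_1)`.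
(Completeness is required separately as a typeclass assumption.) -/
def Cat0 (Y : Type*) [MetricSpace Y] : Prop :=
  GeodesicSpace Y ∧
    ∀ γ : ℝ → Y, IsGeodesic γ → ∀ a : Y, ∀ t ∈ Set.Icc (0:ℝ) 1,
      dist (γ t) a ^ 2 ≤ (1 - t) * dist (γ 0) a ^ 2 + t * dist (γ 1) a ^ 2
        - t * (1 - t) * dist (γ 0) (γ 1) ^ 2

/-- A subset is geodesically convex if every geodesic joining two of its points
lies entirely inside it. -/
def GeodesicConvex {Y : Type*} [MetricSpace Y] (C : Set Y) : Prop :=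
  ∀ γ : ℝ → Y, IsGeodesic γ → γ 0 ∈ C → γ 1 ∈ C → ∀ t ∈ Set.Icc (0:ℝ) 1, γ t ∈ C

/-- `lam`-convexity along geodesics of an extended-real-valued functional:
`E(γ_t) ≤ (1-t)E(γ_0) + tE(γ_1) − (lam/2)t(1−t)d²(γ_0,γ_1)`. -/
def LamConvex {Y : Type*} [MetricSpace Y] (lam : ℝ) (E : Y → EReal) : Prop :=
  ∀ γ : ℝ → Y, IsGeodesic γ → ∀ t ∈ Set.Icc (0:ℝ) 1,
    E (γ t) ≤ ((1 - t : ℝ) : EReal) * E (γ 0) + ((t : ℝ) : EReal) * E (γ 1)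
      - ((lam / 2 * t * (1 - t) * dist (γ 0) (γ 1) ^ 2 : ℝ) : EReal)

/-- The descending slope `|∂⁻E|(y) = limsup_{z→y} (E(y)−E(z))⁺ / d(y,z)`,
set to `∞` outside the domain `{E < ∞}` of `E`. -/
noncomputable def descendingSlope {Y : Type*} [MetricSpace Y] (E : Y → EReal) (y : Y) :
    ℝ≥0∞ :=
  if E y = ⊤ then ⊤
  else Filter.limsup (fun z => ENNReal.ofReal ((E y - E z).toReal / dist y z))
      (nhdsWithin y {y}ᶜ)

/-- `ω(y; (y_n)) := limsup_n d(y, y_n)²`. -/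
noncomputable def asymptoticRadius {Y : Type*} [MetricSpace Y] (yn : ℕ → Y) (y : Y) : ℝ :=
  Filter.limsup (fun n => dist y (yn n) ^ 2) Filter.atTop

/-- Weak convergence of a bounded sequence: `y` is an asymptotic center
(i.e. a minimizer of `ω(·; ·)`) of every subsequence. -/
def WeakConv {Y : Type*} [MetricSpace Y] (yn : ℕ → Y) (y : Y) : Prop :=
  Bornology.IsBounded (Set.range yn) ∧
    ∀ φ : ℕ → ℕ, StrictMono φ →
      ∀ z : Y, asymptoticRadius (yn ∘ φ) y ≤ asymptoticRadius (yn ∘ φ) z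

/-- Absolute continuity on a set `I ⊆ ℝ`: there is a nonnegative integrable `g`
with `d(y_s, y_t) ≤ ∫_s^t g` for `s ≤ t` in `I`. -/
def AbsContOnSet {Y : Type*} [MetricSpace Y] (y : ℝ → Y) (I : Set ℝ) : Prop :=
  ∃ g : ℝ → ℝ, (∀ t, 0 ≤ g t) ∧ MeasureTheory.IntegrableOn g I ∧
    ∀ s ∈ I, ∀ t ∈ I, s ≤ t → dist (y s) (y t) ≤ ∫ r in s..t, g r

/-- Absolute continuity on the interval `[a,b]`. -/
def AbsContOn {Y : Type*} [MetricSpace Y] (y : ℝ → Y) (a b : ℝ) : Prop :=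
  AbsContOnSet y (Set.Icc a b)

/-- Local absolute continuity on `(0,∞)`. -/
def LocAbsCont {Y : Type*} [MetricSpace Y] (y : ℝ → Y) : Prop :=
  ∀ a b : ℝ, 0 < a → a ≤ b → AbsContOn y a b

/-- The Evolution Variational Inequality: for every `z`, for a.e. `t > 0` the
derivative of `t ↦ ½ d²(y_t, z)` exists and
`(d/dt)(½d²(y_t,z)) + E(y_t) + (lam/2)d²(y_t,z) ≤ E(z)`. -/
def EVI {Y : Type*} [MetricSpace Y] (lam : ℝ) (E : Y → EReal) (y : ℝ → Y) : Prop :=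
  ∀ z : Y, ∀ᵐ t ∂(MeasureTheory.volume.restrict (Set.Ioi (0:ℝ))),
    ∃ d' : ℝ, HasDerivAt (fun s => dist (y s) z ^ 2 / 2) d' t ∧
      (d' : EReal) + E (y t) + ((lam / 2 * dist (y t) z ^ 2 : ℝ) : EReal) ≤ E z

/-- A gradient flow trajectory for `E` starting from `y₀`: a locally absolutely
continuous curve on `(0,∞)` converging to `y₀` at `0` and satisfying the EVI. -/
def GradientFlow {Y : Type*} [MetricSpace Y] (lam : ℝ) (E : Y → EReal) (y₀ : Y)
    (y : ℝ → Y) : Prop :=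
  LocAbsCont y ∧ Filter.Tendsto y (nhdsWithin 0 (Set.Ioi 0)) (nhds y₀) ∧ EVI lam E y

open AbsolutelyContinuousOnInterval in
/-- Absolute continuity through an integrable bound on increments implies Mathlib's `ε`-`δ`
absolute continuity. -/
theorem AbsContOn.absolutelyContinuousOnInterval {Y : Type*} [MetricSpace Y] {y : ℝ → Y}
    {a b : ℝ} (hab : a ≤ b) (h : AbsContOn y a b) : AbsolutelyContinuousOnInterval y a b := by
  obtain ⟨g, -, hgi, hg⟩ := h
  have hint : IntervalIntegrable g volume a b :=
    (intervalIntegrable_iff_integrableOn_Icc_of_le hab).2 hgi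
  have hG := hint.absolutelyContinuousOnInterval_intervalIntegral (c := a) left_mem_uIcc
  have hinc : ∀ p ∈ Icc a b, ∀ q ∈ Icc a b, p ≤ q →
      dist (y p) (y q) ≤ dist (∫ r in a..p, g r) (∫ r in a..q, g r) := by
    intro p hp q hq hpq
    have hint' : ∀ c ∈ Icc a b, IntervalIntegrable g volume a c := fun c hc =>
      hint.mono_set (uIcc_subset_uIcc_left (by rwa [uIcc_of_le hab]))
    rw [dist_comm (∫ r in a..p, g r), Real.dist_eq,
      intervalIntegral.integral_interval_sub_left (hint' q hq) (hint' p hp)]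
    exact (hg p hp q hq hpq).trans (le_abs_self _)
  refine squeeze_zero' (Eventually.of_forall fun E => Finset.sum_nonneg fun i _ => dist_nonneg)
    ?_ hG
  filter_upwards [mem_inf_of_right (mem_principal_self (disjWithin a b))] with E hE
  refine Finset.sum_le_sum fun i hi => ?_
  have hmem := hE.1 i hi
  rw [uIcc_of_le hab] at hmem
  rcases le_total (E.2 i).1 (E.2 i).2 with hle | hle
  · exact hinc _ hmem.1 _ hmem.2 hle
  · rw [dist_comm, dist_comm (∫ r in a..(E.2 i).1, g r)]
    exact hinc _ hmem.2 _ hmem.1 hle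

/-- The distance of an absolutely continuous curve to a fixed point is absolutely continuous. -/
theorem AbsolutelyContinuousOnInterval.dist_const {Y : Type*} [PseudoMetricSpace Y] {y : ℝ → Y}
    {a b : ℝ} (h : AbsolutelyContinuousOnInterval y a b) (z : Y) :
    AbsolutelyContinuousOnInterval (fun t => dist (y t) z) a b :=
  squeeze_zero (fun _ => Finset.sum_nonneg fun _ _ => dist_nonneg)
    (fun _ => Finset.sum_le_sum fun _ _ => dist_dist_dist_le_left _ _ _) h

/-- Mean value inequality for absolutely continuous functions. -/
theorem AbsolutelyContinuousOnInterval.sub_le_of_ae_deriv_le {D : ℝ → ℝ} {a b C : ℝ}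
    (hab : a ≤ b) (hD : AbsolutelyContinuousOnInterval D a b)
    (hC : ∀ᵐ t, t ∈ Icc a b → deriv D t ≤ C) : D b - D a ≤ C * (b - a) := by
  rw [← hD.integral_deriv_eq_sub]
  calc ∫ t in a..b, deriv D t ≤ ∫ _ in a..b, C := by
        refine intervalIntegral.integral_mono_ae_restrict hab hD.intervalIntegrable_deriv
          intervalIntegrable_const ?_
        exact (ae_restrict_iff' measurableSet_Icc).2 hC
    _ = C * (b - a) := by rw [intervalIntegral.integral_const, smul_eq_mul, mul_comm]

/-- Where a curve stays within distance `ε` of `z`, the Evolution Variational Inequality of a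
Lipschitz function bounds the derivative of its distance to `z`. -/
theorem EVI.ae_deriv_dist_le {Y : Type*} [MetricSpace Y] {lam : ℝ} {L : ℝ≥0} {f : Y → ℝ}
    (hlip : LipschitzWith L f) {y : ℝ → Y} (hevi : EVI lam (fun x => (f x : EReal)) y)
    {a b ε : ℝ} (ha : 0 < a) (hab : a ≤ b) {z : Y}
    (hy : AbsolutelyContinuousOnInterval y a b) (hε : ∀ t ∈ Icc a b, dist (y t) z ≤ ε) :
    ∀ᵐ t, t ∈ Icc a b → deriv (fun s => dist (y s) z) t ≤ L + |lam| / 2 * ε := by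
  have hevi' := (ae_restrict_iff' measurableSet_Ioi).1 (hevi z)
  filter_upwards [(hy.dist_const z).ae_differentiableAt, hevi'] with t hdiff ht htab
  rw [uIcc_of_le hab] at hdiff
  have hD := (hdiff htab).hasDerivAt
  set D' := deriv (fun s => dist (y s) z) t
  obtain ⟨d', hd', hle⟩ := ht (ha.trans_le htab.1)
  have hle' : d' + f (y t) + lam / 2 * dist (y t) z ^ 2 ≤ f z := by exact_mod_cast hle
  have hd'_eq : d' = dist (y t) z * D' := by
    refine hd'.unique (((hD.pow 2).div_const 2).congr_deriv ?_)
    simp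
    ring
  have hf : f z - f (y t) ≤ L * dist (y t) z := by
    rw [dist_comm]
    exact (le_abs_self _).trans (hlip.dist_le_mul z (y t))
  have hεt := hε t htab
  rcases (dist_nonneg (x := y t) (y := z)).eq_or_lt with h0 | hpos
  · have hmin : IsLocalMin (fun s => dist (y s) z) t :=
      Eventually.of_forall fun s => by simp only [← h0]; exact dist_nonneg
    rw [show D' = 0 from hmin.deriv_eq_zero]
    have : 0 ≤ ε := h0.trans_le hεt
    positivity
  · have hbound : D' ≤ L - lam / 2 * dist (y t) z := by
      refine le_of_mul_le_mul_left ?_ hpos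
      rw [← hd'_eq]
      linarith [show dist (y t) z * (L - lam / 2 * dist (y t) z) =
        L * dist (y t) z - lam / 2 * dist (y t) z ^ 2 by ring]
    have h1 : -lam * dist (y t) z ≤ |lam| * dist (y t) z := by gcongr; exact neg_le_abs lam
    have h2 : |lam| * dist (y t) z ≤ |lam| * ε := by gcongr
    linarith

/-- A locally absolutely continuous curve is continuous at positive times. -/
theorem LocAbsCont.continuousAt {Y : Type*} [MetricSpace Y] {y : ℝ → Y} (hy : LocAbsCont y)
    {t : ℝ} (ht : 0 < t) : ContinuousAt y t := by
  have hle : t / 2 ≤ t + 1 := by linarith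
  have hac : AbsolutelyContinuousOnInterval y (t / 2) (t + 1) :=
    (hy (t / 2) (t + 1) (half_pos ht) hle).absolutelyContinuousOnInterval hle
  have hcont := (hac.dist_const (y t)).continuousOn
  rw [uIcc_of_le hle] at hcont
  have hlim := (hcont.continuousAt (Icc_mem_nhds (half_lt_self ht) (lt_add_one t))).tendsto
  rw [dist_self] at hlim
  exact tendsto_iff_dist_tendsto_zero.2 hlim

/-- A locally absolutely continuous curve satisfying the Evolution Variational Inequality of an
`L`-Lipschitz function is `L`-Lipschitz at positive times. -/
theorem EVI.dist_le {Y : Type*} [MetricSpace Y] {lam : ℝ} {L : ℝ≥0} {f : Y → ℝ}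
    (hlip : LipschitzWith L f) {y : ℝ → Y} (hy : LocAbsCont y)
    (hevi : EVI lam (fun x => (f x : EReal)) y) {a b : ℝ} (ha : 0 < a) (hab : a ≤ b) :
    dist (y b) (y a) ≤ L * (b - a) := by
  have hcont : ContinuousOn (fun t => dist (y t) (y a)) (Icc a b) := fun t ht =>
    (hy.continuousAt (ha.trans_le ht.1)).continuousWithinAt.dist continuousWithinAt_const
  refine image_le_of_liminf_slope_right_le_deriv_boundary (B := fun t => L * (t - a))
    (B' := fun _ => L) hcont (by simp) (by fun_prop) (fun t _ => ?_) ?_ (right_mem_Icc.2 hab)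
  · simpa using (((hasDerivAt_id t).sub_const a).const_mul (L : ℝ)).hasDerivWithinAt
  intro t ht r hr
  have ht0 : 0 < t := ha.trans_le ht.1
  obtain ⟨ε, hε, hεr⟩ : ∃ ε > 0, L + |lam| / 2 * ε < r := by
    refine ⟨(r - L) / (|lam| + 1), div_pos (sub_pos.2 hr) (by positivity), ?_⟩
    have : |lam| / 2 * ((r - L) / (|lam| + 1)) < r - L := by
      rw [← mul_div_assoc, div_lt_iff₀ (by positivity)]
      nlinarith [sub_pos.2 hr, mul_nonneg (abs_nonneg lam) (sub_pos.2 hr).le]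
    linarith
  obtain ⟨δ, hδ, hball⟩ := Metric.continuousAt_iff.1 (hy.continuousAt ht0) ε hε
  refine Eventually.frequently ?_
  filter_upwards [Ioo_mem_nhdsGT (lt_add_of_pos_right t hδ)] with s hs
  have hac := (hy t s ht0 hs.1.le).absolutelyContinuousOnInterval hs.1.le
  have hclose : ∀ u ∈ Icc t s, dist (y u) (y t) ≤ ε := fun u hu => by
    refine (hball ?_).le
    rw [Real.dist_eq, abs_of_nonneg (sub_nonneg.2 hu.1)]
    linarith [hu.2, hs.2]
  have hst := (hac.dist_const (y t)).sub_le_of_ae_deriv_le hs.1.le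
    (hevi.ae_deriv_dist_le hlip ht0 hs.1.le hac hclose)
  rw [dist_self, sub_zero] at hst
  rw [slope_def_field, div_lt_iff₀ (sub_pos.2 hs.1)]
  calc dist (y s) (y a) - dist (y t) (y a) ≤ dist (y s) (y t) := by
        linarith [dist_triangle (y s) (y t) (y a)]
    _ ≤ (L + |lam| / 2 * ε) * (s - t) := hst
    _ < r * (s - t) := mul_lt_mul_of_pos_right hεr (sub_pos.2 hs.1)

/-- **The gradient flow of a `λ`-convex `L`-Lipschitz function on a CAT(0) space extends
continuously to `t = 0` and is `L`-Lipschitz in time.** -/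
theorem gradientFlow_lipschitz_in_time {Y : Type*} [MetricSpace Y] [CompleteSpace Y]
    (hY : Cat0 Y) (lam : ℝ) (L : ℝ≥0) (f : Y → ℝ)
    (hconv : LamConvex lam (fun y => ((f y : ℝ) : EReal)))
    (hlip : LipschitzWith L f)
    (y : Y) (ytraj : ℝ → Y)
    (hgf : GradientFlow lam (fun y => ((f y : ℝ) : EReal)) y ytraj) :
    ∀ s t : ℝ, 0 ≤ s → 0 ≤ t →
      dist (if s = 0 then y else ytraj s) (if t = 0 then y else ytraj t) ≤
        (L : ℝ) * |t - s| := by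
  obtain ⟨hac, htend, hevi⟩ := hgf
  have hpos : ∀ s t : ℝ, 0 < s → s ≤ t → dist (ytraj s) (ytraj t) ≤ L * (t - s) :=
    fun s t hs hst => by rw [dist_comm]; exact hevi.dist_le hlip hac hs hst
  have hzero : ∀ t : ℝ, 0 < t → dist y (ytraj t) ≤ L * t := by
    intro t ht
    have hlim : Tendsto (fun s : ℝ => (L : ℝ) * (t - s)) (𝓝[>] 0) (𝓝 (L * t)) := by
      have hc : Continuous fun s : ℝ => (L : ℝ) * (t - s) := by fun_prop
      simpa using (hc.tendsto 0).mono_left nhdsWithin_le_nhds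
    refine le_of_tendsto_of_tendsto (htend.dist tendsto_const_nhds) hlim ?_
    filter_upwards [Ioo_mem_nhdsGT ht] with s hs
    exact hpos s t hs.1 hs.2.le
  intro s t hs ht
  wlog hst : s ≤ t generalizing s t
  · rw [dist_comm, abs_sub_comm]
    exact this t s ht hs (le_of_not_ge hst)
  rw [abs_of_nonneg (sub_nonneg.2 hst)]
  rcases hs.eq_or_lt with rfl | hs
  · rcases ht.eq_or_lt with rfl | ht
    · simp
    · simpa [ht.ne'] using hzero t ht
  · simpa [hs.ne', (hs.trans_le hst).ne'] using hpos s t hs hst
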